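/- Let R be a unital ring with involution, let a, b ∈ R, let x be a core inverse of a, and let g be a group inverse of a (a g a = a, g a g = g, a g = g a). If a is below b in the core partial order (i.e. x a = x b and a x = b x), then a is below b in the sharp partial order (g a = g b and a g = b g) if and only if a b = b a. -/

import Mathlib

/-- `x` is a core inverse of `a` in a unital `*`-ring:
`a x a = a`, `x a x = x`, `(a x)* = a x`, `x a² = a`, `a x² = x`. -/
def IsCoreInverse {R : Type*} [Ring R] [StarRing R] (a x : R) : Prop :=
  a * x * a = a ∧ x * a * x = x ∧ star (a * x) = a * x ∧ x * a ^ 2 = a ∧ a * x ^ 2 = x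

theorem core_le_sharp_iff_comm {R : Type*} [Ring R] [StarRing R] (a b x g : R)
    (hx : IsCoreInverse a x)
    (hg1 : a * g * a = a) (hg2 : g * a * g = g) (hg3 : a * g = g * a)
    (hle : x * a = x * b ∧ a * x = b * x) :
    (g * a = g * b ∧ a * g = b * g) ↔ a * b = b * a := by
  obtain ⟨h1, h2, h3, h4, h5⟩ := hx
  obtain ⟨l1, l2⟩ := hle
  have hba : b * a = a * a := by
    calc b * a = b * (x * a ^ 2) := by rw [h4]
      _ = (b * x) * a ^ 2 := by rw [mul_assoc]
      _ = a * x * a * a := by rw [← l2, pow_two, mul_assoc (a * x)]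
      _ = a * a := by rw [h1]
  have hgg : g = g * g * a := by
    calc g = g * (a * g) := by rw [← mul_assoc, hg2]
      _ = g * g * a := by rw [hg3, mul_assoc]
  have hgg' : g = a * g * g := by rw [hg3, hg2]
  constructor
  · rintro ⟨s1, s2⟩
    have haa : a = a * a * g := by rw [mul_assoc, hg3, ← mul_assoc, hg1]
    rw [hba]
    calc a * b = a * a * g * b := by rw [← haa]
      _ = a * a * (g * b) := by rw [mul_assoc]
      _ = a * a * g * a := by rw [← s1, ← mul_assoc]
      _ = a * a := by rw [← haa]
  · intro hc
    rw [hba] at hc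
    constructor
    · symm
      calc g * b = g * g * a * b := by rw [← hgg]
        _ = g * g * (a * b) := by rw [mul_assoc]
        _ = g * g * a * a := by rw [hc, ← mul_assoc]
        _ = g * a := by rw [← hgg]
    · symm
      calc b * g = b * (a * g * g) := by rw [← hgg']
        _ = b * a * g * g := by simp only [mul_assoc]
        _ = a * (a * g * g) := by rw [hba]; simp only [mul_assoc]
        _ = a * g := by rw [← hgg']
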